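/- Let A be a complex Banach algebra, φ a character on A, and u ∈ A an element with φ(u) = 1 and a·u = φ(a)·u for all a ∈ A. Let E be a Banach A-bimodule in the class M_φ and D : A → E a bounded derivation. Then the element t := D(u) implements D explicitly: D(a) = φ(a)·t − a • t for all a ∈ A; in particular D is inner. (Explicit form of the sufficiency direction in the proof of Theorem 3.1) -/

import Mathlib

open NormedSpace

universe u v w

/- `A` is a complex Banach algebra (not necessarily unital). -/
variable {A : Type u} [NonUnitalNormedRing A] [NormedSpace ℂ A]
  [IsScalarTower ℂ A A] [SMulCommClass ℂ A A] [CompleteSpace A]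

section Algebraic

variable {R B M : Type*} [CommSemiring R] [NonUnitalNonAssocSemiring B] [Module R B]
  [AddCommGroup M] [Module R M]

theorem derivation_apply_eq_smul_sub_action {φ : B →ₗ[R] R} {u : B} (hu1 : φ u = 1)
    (hu2 : ∀ a : B, a * u = φ a • u) {s : B →ₗ[R] M →ₗ[R] M} {D : B →ₗ[R] M}
    (hD : ∀ a b : B, D (a * b) = φ b • D a + s a (D b)) (a : B) :
    D a = φ a • D u - s a (D u) := by
  refine eq_sub_of_add_eq ?_
  calc
    D a + s a (D u) = φ u • D a + s a (D u) := by rw [hu1, one_smul]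
    _ = D (a * u) := (hD a u).symm
    _ = φ a • D u := by rw [hu2, map_smul]

theorem derivation_explicitly_inner_of_u_general {φ : B →ₗ[R] R} {u : B} (hu1 : φ u = 1)
    (hu2 : ∀ a : B, a * u = φ a • u) {s : B →ₗ[R] M →ₗ[R] M} {D : B →ₗ[R] M}
    (hD : ∀ a b : B, D (a * b) = φ b • D a + s a (D b)) :
    (∀ a : B, D a = φ a • D u - s a (D u)) ∧
      ∃ x : M, ∀ a : B, D a = s a x - φ a • x := by
  have implements := derivation_apply_eq_smul_sub_action hu1 hu2 hD
  refine ⟨implements, -D u, fun a => ?_⟩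
  calc
    D a = φ a • D u - s a (D u) := implements a
    _ = s a (-D u) - φ a • (-D u) := by rw [map_neg, smul_neg, neg_sub_neg]

end Algebraic

/-- **Explicit sufficiency direction in the proof of Theorem 3.1.** If `u ∈ A`
satisfies `φ u = 1` and `a * u = φ a • u` for all `a`, then for every Banach space `E`
with a bounded left `A`-module action `s` (right action `x · a := φ a • x`, so
`E ∈ M_φ`) and every bounded derivation `D : A → E`, the element `t := D u`
implements `D` explicitly: `D a = φ a • t - a • t`; in particular `D` is inner. -/
theorem derivation_explicitly_inner_of_u
    (φ : A →L[ℂ] ℂ) (hφmul : ∀ a b : A, φ (a * b) = φ a * φ b) (hφne : φ ≠ 0)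
    (u : A) (hu1 : φ u = 1) (hu2 : ∀ a : A, a * u = φ a • u)
    (E : Type v) [NormedAddCommGroup E] [NormedSpace ℂ E] [CompleteSpace E]
    (s : A →ₗ[ℂ] E →ₗ[ℂ] E)
    (hs : ∀ (a b : A) (x : E), s (a * b) x = s a (s b x))
    (hbound : ∀ (a : A) (x : E), ‖s a x‖ ≤ ‖a‖ * ‖x‖)
    (D : A →L[ℂ] E)
    (hD : ∀ a b : A, D (a * b) = φ b • D a + s a (D b)) :
    (∀ a : A, D a = φ a • D u - s a (D u)) ∧
      ∃ x : E, ∀ a : A, D a = s a x - φ a • x :=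
  derivation_explicitly_inner_of_u_general (φ := φ.toLinearMap) (D := D.toLinearMap) hu1 hu2 hD
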